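/- Assume b₀ − 2b₁ > 0 and b₀ + (m−2)b₁ > 0. Then M₀ is invertible, and x(a)ᵀ M₀⁻¹ x(a) = p for every treatment a ∈ A. (The standardized prediction variance of the uniform design measure is constant and equal to p, the G-optimality property.) -/

import Mathlib

open Matrix Finset

namespace OofA

/-- The index set `S` of pairs `(i,j)` with `i < j`. -/
abbrev Pairs (m : ℕ) := {ij : Fin m × Fin m // ij.1 < ij.2}

/-- `z_{ij}(a)`: for a treatment `a` (a permutation, `a k` being the component placed at
position `k`), this equals `c h` where `h` is the distance between the positions of the
components `i` and `j` in `a`, with sign `+` if `i` precedes `j` and `-` otherwise. -/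
noncomputable def z {m : ℕ} (c : ℕ → ℝ) (a : Equiv.Perm (Fin m)) (ij : Pairs m) : ℝ :=
  if (a.symm ij.1.1 : ℕ) < (a.symm ij.1.2 : ℕ) then
    c (Nat.dist (a.symm ij.1.1 : ℕ) (a.symm ij.1.2 : ℕ))
  else
    -c (Nat.dist (a.symm ij.1.1 : ℕ) (a.symm ij.1.2 : ℕ))

/-- The vector `x(a) = (1, z(a)ᵀ)ᵀ ∈ ℝ^p`, indexed by `Unit ⊕ Pairs m`. -/
noncomputable def x {m : ℕ} (c : ℕ → ℝ) (a : Equiv.Perm (Fin m)) : (Unit ⊕ Pairs m) → ℝ :=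
  Sum.elim (fun _ => (1 : ℝ)) (z c a)

/-- The moment matrix `M(w) = Σ_a w(a) x(a) x(a)ᵀ` of a design measure `w`. -/
noncomputable def momentMatrix {m : ℕ} (c : ℕ → ℝ) (w : Equiv.Perm (Fin m) → ℝ) :
    Matrix (Unit ⊕ Pairs m) (Unit ⊕ Pairs m) ℝ :=
  ∑ a : Equiv.Perm (Fin m), w a • Matrix.vecMulVec (x c a) (x c a)

/-- The moment matrix `M₀` of the uniform design measure `w₀(a) = 1/m!`. -/
noncomputable def M0 (m : ℕ) (c : ℕ → ℝ) : Matrix (Unit ⊕ Pairs m) (Unit ⊕ Pairs m) ℝ :=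
  momentMatrix c (fun _ => 1 / (Nat.factorial m : ℝ))

/-- A signed permutation matrix: exactly one nonzero entry in each row and in each column,
each nonzero entry being `1` or `-1`. -/
def IsSignedPerm {n : Type*} [Fintype n] (R : Matrix n n ℝ) : Prop :=
  (∀ i, ∃! j, R i j ≠ 0) ∧ (∀ j, ∃! i, R i j ≠ 0) ∧
    (∀ i j, R i j ≠ 0 → R i j = 1 ∨ R i j = -1)

/-- `b₀ = (2/(m(m−1))) Σ_{h=1}^{m−1} (m−h) c_h²`. -/
noncomputable def b0 (m : ℕ) (c : ℕ → ℝ) : ℝ :=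
  (2 / ((m : ℝ) * ((m : ℝ) - 1))) *
    ∑ h ∈ Finset.Icc 1 (m - 1), ((m : ℝ) - (h : ℝ)) * (c h) ^ 2

/-- `b₁ = (2/(m(m−1)(m−2))) Σ (m−h₁−h₂) c_{h₁} (2c_{h₁+h₂} − c_{h₂})`,
summed over `h₁, h₂ ≥ 1` with `h₁ + h₂ ≤ m − 1`. -/
noncomputable def b1 (m : ℕ) (c : ℕ → ℝ) : ℝ :=
  (2 / ((m : ℝ) * ((m : ℝ) - 1) * ((m : ℝ) - 2))) *
    ∑ h1 ∈ Finset.Icc 1 (m - 1), ∑ h2 ∈ Finset.Icc 1 (m - 1 - h1),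
      ((m : ℝ) - (h1 : ℝ) - (h2 : ℝ)) * c h1 * (2 * c (h1 + h2) - c h2)

/-- The `q × q` matrix `V` of (7). -/
noncomputable def V (m : ℕ) : Matrix (Pairs m) (Pairs m) ℝ := fun ij kl =>
  if (ij.1.1 = kl.1.1 ∧ ij.1.2 ≠ kl.1.2) ∨ (ij.1.1 ≠ kl.1.1 ∧ ij.1.2 = kl.1.2) then 1
  else if ij.1.1 = kl.1.2 ∨ ij.1.2 = kl.1.1 then -1
  else 0

lemma exists_perm3 {α : Type*} [DecidableEq α] (i j k p q r : α) (hij : i ≠ j) (hjk : j ≠ k)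
    (hik : i ≠ k) (hpq : p ≠ q) (hqr : q ≠ r) (hpr : p ≠ r) :
    ∃ σ : Equiv.Perm α, σ i = p ∧ σ j = q ∧ σ k = r := by
  obtain ⟨s1, h1⟩ : ∃ s : Equiv.Perm α, s i = p := ⟨Equiv.swap i p, by simp⟩
  obtain ⟨s2, h2, h2'⟩ : ∃ s : Equiv.Perm α, s i = p ∧ s j = q := by
    refine ⟨s1.trans (Equiv.swap (s1 j) q), ?_, by simp⟩
    simp only [Equiv.trans_apply, h1]
    exact Equiv.swap_apply_of_ne_of_ne (by rw [← h1]; exact s1.injective.ne hij) hpq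
  refine ⟨s2.trans (Equiv.swap (s2 k) r), ?_, ?_, by simp⟩
  · simp only [Equiv.trans_apply, h2]
    exact Equiv.swap_apply_of_ne_of_ne (by rw [← h2]; exact s2.injective.ne hik) hpr
  · simp only [Equiv.trans_apply, h2']
    exact Equiv.swap_apply_of_ne_of_ne (by rw [← h2']; exact s2.injective.ne hjk) hqr

lemma F_perm {α : Type*} [Fintype α] (C u : α → α → ℝ) (K : ℝ)
    (hF : ∀ σ : Equiv.Perm α, ∑ x, ∑ y, C (σ x) (σ y) * u x y = K) (σ π : Equiv.Perm α) :
    ∑ x, ∑ y, C (σ x) (σ y) * u (π x) (π y) = K := by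
  rw [← hF (π.symm.trans σ)]
  conv_rhs => rw [← Equiv.sum_comp π]
  refine Finset.sum_congr rfl fun x _ => ?_
  conv_rhs => rw [← Equiv.sum_comp π]
  simp

def EE {α : Type*} [DecidableEq α] (p q x y : α) : ℝ :=
  (if x = p then if y = q then 1 else 0 else 0) - (if x = q then if y = p then 1 else 0 else 0)

lemma sum_EE {α : Type*} [Fintype α] [DecidableEq α] (D : α → α → ℝ) (p q : α) :
    ∑ x, ∑ y, D x y * EE p q x y = D p q - D q p := by
  have : ∀ p q x : α, ∑ y, D x y * (if x = p then if y = q then (1:ℝ) else 0 else 0)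
     = if x = p then D x q else 0 := by
    intro p q x
    split_ifs <;> simp
  simp only [EE, mul_sub, Finset.sum_sub_distrib, this]
  simp

lemma alt_eq {α : Type*} [DecidableEq α] (u : α → α → ℝ)
    (hu : ∀ x y, u x y = - u y x) (i j k : α) (hij : i ≠ j) (hjk : j ≠ k) (hik : i ≠ k) (x y : α) :
    u x y + u (((Equiv.swap i j) * (Equiv.swap j k)) x) (((Equiv.swap i j) * (Equiv.swap j k)) y)
      + u (((Equiv.swap j k) * (Equiv.swap i j)) x) (((Equiv.swap j k) * (Equiv.swap i j)) y)
      - u (Equiv.swap i j x) (Equiv.swap i j y)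
      - u (Equiv.swap j k x) (Equiv.swap j k y)
      - u (Equiv.swap i k x) (Equiv.swap i k y)
    = 2 * (u i j + u j k + u k i) * (EE i j x y + EE j k x y + EE k i x y) := by
  have h0 : ∀ x, u x x = 0 := fun x => by have := hu x x; linarith
  have e1 := hu j i
  have e2 := hu k j
  have e3 := hu i k
  clear hu
  simp only [Equiv.Perm.mul_apply]
  have hs : ∀ p q x : α, x ≠ p → x ≠ q → Equiv.swap p q x = x :=
    fun p q x h h' => Equiv.swap_apply_of_ne_of_ne h h'
  have hx : x = i ∨ x = j ∨ x = k ∨ (x ≠ i ∧ x ≠ j ∧ x ≠ k) := by tauto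
  have hy : y = i ∨ y = j ∨ y = k ∨ (y ≠ i ∧ y ≠ j ∧ y ≠ k) := by tauto
  rcases hx with rfl | rfl | rfl | ⟨hx1, hx2, hx3⟩ <;>
  rcases hy with rfl | rfl | rfl | ⟨hy1, hy2, hy3⟩ <;>
  (simp only [EE, ne_eq, hs, h0, hij, hjk, hik, hij.symm, hjk.symm, hik.symm, Equiv.swap_apply_left,
    Equiv.swap_apply_right, not_false_eq_true, if_true, if_false, *]; try ring_nf) <;>
  (try linarith)

lemma stepA {α : Type*} [Fintype α] [DecidableEq α] (C u : α → α → ℝ) (K : ℝ)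
    (hC : ∀ x y, C x y = - C y x)
    (hu : ∀ x y, u x y = - u y x)
    (hF : ∀ σ : Equiv.Perm α, ∑ x, ∑ y, C (σ x) (σ y) * u x y = K)
    (p q r : α) (hpq : p ≠ q) (hqr : q ≠ r) (hpr : p ≠ r) (hne : C p q + C q r + C r p ≠ 0)
    (i j k : α) (hij : i ≠ j) (hjk : j ≠ k) (hik : i ≠ k) : u i j + u j k + u k i = 0 := by
  obtain ⟨σ, rfl, rfl, rfl⟩ := exists_perm3 i j k p q r hij hjk hik hpq hqr hpr
  have h := F_perm C u K hF σ
  have key : ∑ x, ∑ y, C (σ x) (σ y) *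
      (2 * (u i j + u j k + u k i) * (EE i j x y + EE j k x y + EE k i x y)) = 0 := by
    simp only [← alt_eq u hu i j k hij hjk hik]
    simp only [mul_sub, mul_add, Finset.sum_sub_distrib, Finset.sum_add_distrib]
    have h1 := h 1
    simp only [Equiv.Perm.one_apply] at h1
    rw [h1, h, h, h, h, h]
    ring
  have key2 : ∑ x, ∑ y, C (σ x) (σ y) *
      (2 * (u i j + u j k + u k i) * (EE i j x y + EE j k x y + EE k i x y))
      = 2 * (u i j + u j k + u k i) * (∑ x, ∑ y, C (σ x) (σ y) * EE i j x y
        + ∑ x, ∑ y, C (σ x) (σ y) * EE j k x y + ∑ x, ∑ y, C (σ x) (σ y) * EE k i x y) := by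
    simp only [← Finset.sum_add_distrib, Finset.mul_sum]
    refine Finset.sum_congr rfl fun x _ => Finset.sum_congr rfl fun y _ => by ring
  rw [key2, sum_EE (fun x y => C (σ x) (σ y)), sum_EE (fun x y => C (σ x) (σ y)),
    sum_EE (fun x y => C (σ x) (σ y))] at key
  have e1 := hC (σ j) (σ i)
  have e2 := hC (σ k) (σ j)
  have e3 := hC (σ i) (σ k)
  have : (u i j + u j k + u k i) * (C (σ i) (σ j) + C (σ j) (σ k) + C (σ k) (σ i)) = 0 := by
    rw [e1, e2, e3] at key
    linarith
  exact (mul_eq_zero.mp this).resolve_right hne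

lemma stepB {α : Type*} [Fintype α] [DecidableEq α] (C u : α → α → ℝ) (K : ℝ)
    (hC : ∀ x y, C x y = - C y x)
    (hu : ∀ x y, u x y = - u y x)
    (hF : ∀ σ : Equiv.Perm α, ∑ x, ∑ y, C (σ x) (σ y) * u x y = K)
    (p q r : α) (hpq : p ≠ q) (hqr : q ≠ r) (hpr : p ≠ r) (hne : C p q + C q r + C r p ≠ 0)
    (hW : ∑ y, C p y ≠ ∑ y, C r y) (i j : α) : u i j = 0 := by
  have h0 : ∀ x, u x x = 0 := fun x => by have := hu x x; linarith
  by_cases hij : i = j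
  · rw [hij, h0]
  have hT : ∀ x y, u x y = u x i - u y i := by
    intro x y
    by_cases h1 : x = y
    · subst h1; rw [h0]; ring
    by_cases h2 : x = i
    · subst h2; rw [h0, hu]; ring
    by_cases h3 : y = i
    · subst h3; rw [h0]; ring
    have := stepA C u K hC hu hF p q r hpq hqr hpr hne x y i h1 h3 h2
    have := hu x i
    linarith
  obtain ⟨k, hki, hkj⟩ : ∃ k, k ≠ i ∧ k ≠ j := by
    by_contra hcon
    push Not at hcon
    have a1 := hcon p
    have a2 := hcon q
    have a3 := hcon r
    clear hcon hT h0 hW hne hF hu hC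
    by_cases b1 : p = i <;> by_cases b2 : q = i <;> by_cases b3 : r = i <;> simp_all
  obtain ⟨σ, h1, -, h3⟩ := exists_perm3 i k j p q r hki.symm hkj hij hpq hqr hpr
  have hs : ∀ x, u x i - u (Equiv.swap i j x) i =
      u i j * ((if x = i then 1 else 0) - (if x = j then 1 else 0)) := by
    intro x
    have := hu i j
    by_cases hx : x = i
    · subst hx; simp [h0, hij, this]
    by_cases hx' : x = j
    · subst hx'; simp [h0, hx, this]
    · simp [Equiv.swap_apply_of_ne_of_ne hx hx', hx, hx']
  have e1 := F_perm C u K hF σ 1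
  have e2 := F_perm C u K hF σ (Equiv.swap i j)
  have key : ∑ x, ∑ y, C (σ x) (σ y) * (u x y - u (Equiv.swap i j x) (Equiv.swap i j y)) = 0 := by
    simp only [mul_sub, Finset.sum_sub_distrib]
    simp only [Equiv.Perm.one_apply] at e1
    rw [e1, e2]; ring
  let g : α → ℝ := fun x => u i j * ((if x = i then 1 else 0) - (if x = j then 1 else 0))
  have hg : ∀ x y, u x y - u (Equiv.swap i j x) (Equiv.swap i j y) = g x - g y := by
    intro x y
    rw [hT x y, hT (Equiv.swap i j x)]
    have := hs x
    have := hs y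
    simp only [g]
    linarith
  simp only [hg, mul_sub, Finset.sum_sub_distrib] at key
  rw [Finset.sum_comm (f := fun x y => C (σ x) (σ y) * g y)] at key
  have k1 : ∀ x, ∑ y, C (σ x) (σ y) * g x = g x * ∑ y, C (σ x) y := by
    intro x
    rw [← Equiv.sum_comp σ (fun y => C (σ x) y), Finset.mul_sum]
    exact Finset.sum_congr rfl fun y _ => by ring
  have k2 : ∀ x, ∑ y, C (σ y) (σ x) * g x = - (g x * ∑ y, C (σ x) y) := by
    intro x
    rw [← k1, ← Finset.sum_neg_distrib]
    exact Finset.sum_congr rfl fun y _ => by rw [hC]; ring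
  simp only [k1, k2, Finset.sum_neg_distrib] at key
  have k3 : ∑ x, g x * ∑ y, C (σ x) y = u i j * (∑ y, C (σ i) y - ∑ y, C (σ j) y) := by
    simp [g, mul_sub, sub_mul, Finset.sum_sub_distrib]
  rw [k3, h1, h3] at key
  have : u i j * (∑ y, C p y - ∑ y, C r y) = 0 := by linarith
  exact (mul_eq_zero.mp this).resolve_right (sub_ne_zero.mpr hW)

/-- antisymmetric position function -/
noncomputable def CC (m : ℕ) (c : ℕ → ℝ) (k l : Fin m) : ℝ :=
  if k < l then c (Nat.dist k l) else if l < k then -c (Nat.dist k l) else 0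

lemma CC_anti (m : ℕ) (c : ℕ → ℝ) (k l : Fin m) : CC m c k l = - CC m c l k := by
  unfold CC
  rw [Nat.dist_comm (l : ℕ) k]
  rcases lt_trichotomy k l with h | h | h
  · simp [h, h.not_gt]
  · simp [h]
  · simp [h, h.not_gt]

lemma z_eq {m : ℕ} (c : ℕ → ℝ) (a : Equiv.Perm (Fin m)) (p : Pairs m) :
    z c a p = CC m c (a.symm p.1.1) (a.symm p.1.2) := by
  have hne : a.symm p.1.1 ≠ a.symm p.1.2 := a.symm.injective.ne p.2.ne
  unfold z CC
  by_cases h : a.symm p.1.1 < a.symm p.1.2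
  · have h' : (a.symm p.1.1 : ℕ) < a.symm p.1.2 := h
    rw [if_pos h, if_pos h']
  · have h' : ¬ (a.symm p.1.1 : ℕ) < a.symm p.1.2 := h
    rw [if_neg h, if_neg h', if_pos (lt_of_le_of_ne (not_lt.mp h) hne.symm)]

/-- antisymmetric extension of a vector indexed by pairs -/
noncomputable def ext {m : ℕ} (v : Pairs m → ℝ) (i j : Fin m) : ℝ :=
  if h : i < j then v ⟨(i, j), h⟩ else if h : j < i then - v ⟨(j, i), h⟩ else 0

lemma ext_anti {m : ℕ} (v : Pairs m → ℝ) (i j : Fin m) : ext v i j = - ext v j i := by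
  unfold ext
  rcases lt_trichotomy i j with h | h | h
  · simp [h, h.not_gt]
  · simp [h]
  · simp [h, h.not_gt]

lemma ext_pair {m : ℕ} (v : Pairs m → ℝ) (p : Pairs m) : ext v p.1.1 p.1.2 = v p := by
  unfold ext
  rw [dif_pos p.2]

lemma sum_pairs {m : ℕ} (H : Fin m → Fin m → ℝ) (hs : ∀ i j, H i j = H j i)
    (hd : ∀ i, H i i = 0) : ∑ i, ∑ j, H i j = 2 * ∑ p : Pairs m, H p.1.1 p.1.2 := by
  have h1 : ∀ i j, H i j = (if i < j then H i j else 0) + (if j < i then H j i else 0) := by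
    intro i j
    rcases lt_trichotomy i j with h | h | h
    · simp [h, h.not_gt]
    · simp [h, hd]
    · simp [h, h.not_gt, hs i j]
  have h2 : ∑ i, ∑ j, (if i < j then H i j else 0) = ∑ p : Pairs m, H p.1.1 p.1.2 := by
    rw [← Fintype.sum_prod_type' (f := fun i j => if i < j then H i j else 0),
      ← Finset.sum_filter]
    exact Finset.sum_subtype _ (by simp) (fun p : Fin m × Fin m => H p.1 p.2)
  rw [Finset.sum_congr rfl fun i _ => Finset.sum_congr rfl fun j _ => h1 i j]
  simp only [Finset.sum_add_distrib]
  rw [Finset.sum_comm (f := fun i j => if j < i then H j i else 0), h2]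
  ring

lemma c_nonneg {m : ℕ} (c : ℕ → ℝ)
    (hmono : ∀ h : ℕ, 1 ≤ h → h + 1 ≤ m - 1 → c (h + 1) ≤ c h)
    (hlast : 0 ≤ c (m - 1)) (h : ℕ) (h1 : 1 ≤ h) (h2 : h ≤ m - 1) : 0 ≤ c h := by
  obtain ⟨d, hd⟩ := Nat.exists_eq_add_of_le h2
  induction d generalizing h with
  | zero => rw [show h = m - 1 by omega]; exact hlast
  | succ d ih =>
    exact (ih (h + 1) (by omega) (by omega) (by omega)).trans (hmono h h1 (by omega))

lemma isUnit_M0 {m : ℕ} (hm : 3 ≤ m) (c : ℕ → ℝ) (hc1 : c 1 = 1)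
    (hmono : ∀ h : ℕ, 1 ≤ h → h + 1 ≤ m - 1 → c (h + 1) ≤ c h)
    (hlast : 0 ≤ c (m - 1)) : IsUnit (M0 m c) := by
  rw [← Matrix.mulVec_injective_iff_isUnit]
  rw [← Matrix.coe_mulVecLin, injective_iff_map_eq_zero]
  intro v hv
  rw [Matrix.mulVecLin_apply] at hv
  have hx : ∀ a : Equiv.Perm (Fin m), x c a ⬝ᵥ v = 0 := by
    have h1 : v ⬝ᵥ (M0 m c *ᵥ v) = 0 := by rw [hv]; simp
    have h2 : v ⬝ᵥ (M0 m c *ᵥ v)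
        = ∑ a : Equiv.Perm (Fin m), 1 / (Nat.factorial m : ℝ) * (x c a ⬝ᵥ v) ^ 2 := by
      unfold M0 momentMatrix
      rw [Matrix.sum_mulVec, dotProduct_sum]
      refine Finset.sum_congr rfl fun a _ => ?_
      rw [Matrix.smul_mulVec, Matrix.vecMulVec_mulVec, dotProduct_smul]
      simp only [dotProduct_comm v, smul_eq_mul, op_smul_eq_smul, smul_dotProduct]
      ring
    rw [h2, Finset.sum_eq_zero_iff_of_nonneg (fun a _ => by positivity)] at h1
    intro a
    have := h1 a (Finset.mem_univ a)
    have hf : (1 / (Nat.factorial m : ℝ)) ≠ 0 := by positivity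
    simpa [hf, Nat.factorial_ne_zero] using this
  have hxa : ∀ a : Equiv.Perm (Fin m), x c a ⬝ᵥ v
      = v (Sum.inl ()) + ∑ p : Pairs m, z c a p * v (Sum.inr p) := by
    intro a
    simp [dotProduct, x]
  let u := ext (fun p => v (Sum.inr p))
  have hF : ∀ σ : Equiv.Perm (Fin m), ∑ i, ∑ j, CC m c (σ i) (σ j) * u i j
      = - 2 * v (Sum.inl ()) := by
    intro σ
    rw [sum_pairs (fun i j => CC m c (σ i) (σ j) * u i j)]
    · have h := hx σ.symm
      rw [hxa] at h
      simp only [z_eq, Equiv.symm_symm] at h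
      simp only [u, ext_pair]
      linarith
    · intro i j
      simp only [u]
      rw [CC_anti, ext_anti]; ring
    · intro i
      simp [CC]
  have hu0 : ∀ i j, u i j = 0 := by
    have hcn := c_nonneg c hmono hlast
    refine stepB (CC m c) u _ (CC_anti m c) (ext_anti _) hF
      ⟨0, by omega⟩ ⟨1, by omega⟩ ⟨m - 1, by omega⟩ (by simp) (by simp; omega) (by simp; omega) ?_ ?_
    · have e1 : CC m c ⟨0, by omega⟩ ⟨1, by omega⟩ = c 1 := by
        simp [CC, Nat.dist]
      have e2 : CC m c ⟨1, by omega⟩ ⟨m - 1, by omega⟩ = c (m - 2) := by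
        have : 1 < m - 1 := by omega
        simp only [CC, Fin.mk_lt_mk, this, if_true]
        congr 1
        simp only [Nat.dist]; omega
      have e3 : CC m c ⟨m - 1, by omega⟩ ⟨0, by omega⟩ = - c (m - 1) := by
        have : 0 < m - 1 := by omega
        simp only [CC, Fin.mk_lt_mk, this, this.not_gt, if_true, if_false]
        congr 2
        simp only [Nat.dist]; omega
      have e4 := hmono (m - 2) (by omega) (by omega)
      rw [show m - 2 + 1 = m - 1 by omega] at e4
      rw [e1, e2, e3, hc1]
      apply ne_of_gt
      linarith
    · have hd : ∀ k l : Fin m, k ≠ l → 0 ≤ c (Nat.dist k l) := by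
        intro k l hkl
        have hkl' : (k : ℕ) ≠ l := fun h => hkl (Fin.ext h)
        apply hcn <;> (simp only [Nat.dist]; omega)
      have g1 : 0 < ∑ y, CC m c ⟨0, by omega⟩ y := by
        apply Finset.sum_pos'
        · intro y _
          unfold CC
          split_ifs with h h
          · exact hd _ _ h.ne
          · exact absurd h (by simp [Fin.lt_def])
          · exact le_rfl
        · refine ⟨⟨1, by omega⟩, Finset.mem_univ _, ?_⟩
          simp [CC, Nat.dist, hc1]
      have g2 : ∑ y, CC m c ⟨m - 1, by omega⟩ y ≤ 0 := by
        apply Finset.sum_nonpos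
        intro y _
        unfold CC
        split_ifs with h h
        · exact absurd h (by simp only [Fin.lt_def]; omega)
        · exact neg_nonpos.mpr (hd _ _ h.ne')
        · exact le_rfl
      exact (lt_of_le_of_lt g2 g1).ne'
  have hv2 : ∀ p, v (Sum.inr p) = 0 := fun p => by
    have := hu0 p.1.1 p.1.2
    rwa [show u p.1.1 p.1.2 = v (Sum.inr p) from ext_pair _ p] at this
  have hv1 : v (Sum.inl ()) = 0 := by
    have := hx 1
    rw [hxa] at this
    simpa [hv2] using this
  funext s
  rcases s with ⟨⟩ | p
  · exact hv1
  · exact hv2 p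

lemma exists_R {m : ℕ} (c : ℕ → ℝ) (π : Equiv.Perm (Fin m)) :
    ∃ R : Matrix (Unit ⊕ Pairs m) (Unit ⊕ Pairs m) ℝ,
      ∀ a : Equiv.Perm (Fin m), x c (π * a) = R *ᵥ x c a := by
  let L : (Unit ⊕ Pairs m → ℝ) →ₗ[ℝ] (Unit ⊕ Pairs m → ℝ) :=
    { toFun := fun v => Sum.elim (fun _ => v (Sum.inl ()))
        (fun p => ext (fun q => v (Sum.inr q)) (π.symm p.1.1) (π.symm p.1.2))
      map_add' := by
        intro v w
        funext s
        rcases s with s | p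
        · simp
        · simp only [Sum.elim_inr, Pi.add_apply, ext]
          split_ifs <;> ring
      map_smul' := by
        intro r v
        funext s
        rcases s with s | p
        · simp
        · simp only [Sum.elim_inr, Pi.smul_apply, ext, smul_eq_mul, RingHom.id_apply]
          split_ifs <;> ring }
  refine ⟨LinearMap.toMatrix' L, fun a => ?_⟩
  rw [LinearMap.toMatrix'_mulVec]
  funext s
  rcases s with s | p
  · simp [L, x]
  · have hne : π.symm p.1.1 ≠ π.symm p.1.2 := π.symm.injective.ne p.2.ne
    have hsym : ∀ t, (π * a).symm t = a.symm (π.symm t) := fun t => rfl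
    simp only [L, x, LinearMap.coe_mk, AddHom.coe_mk, Sum.elim_inr, ext, z_eq, hsym]
    rcases lt_or_gt_of_ne hne with h | h
    · rw [dif_pos h]
    · rw [dif_neg h.not_gt, dif_pos h]
      exact CC_anti _ _ _ _

lemma M0_conj {m : ℕ} (c : ℕ → ℝ) (π : Equiv.Perm (Fin m))
    (R : Matrix (Unit ⊕ Pairs m) (Unit ⊕ Pairs m) ℝ)
    (hR : ∀ a : Equiv.Perm (Fin m), x c (π * a) = R *ᵥ x c a) :
    M0 m c = R * M0 m c * Rᵀ := by
  conv_lhs => unfold M0 momentMatrix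
  rw [← Equiv.sum_comp (Equiv.mulLeft π)]
  unfold M0 momentMatrix
  rw [Finset.mul_sum, Finset.sum_mul]
  refine Finset.sum_congr rfl fun a _ => ?_
  simp only [Equiv.coe_mulLeft, hR]
  rw [Matrix.mul_smul, Matrix.smul_mul, Matrix.mul_vecMulVec, Matrix.vecMulVec_mul,
    Matrix.vecMul_transpose]

lemma quad_const {m : ℕ} (c : ℕ → ℝ) (hU : IsUnit (M0 m c)) (π a : Equiv.Perm (Fin m)) :
    x c (π * a) ⬝ᵥ ((M0 m c)⁻¹ *ᵥ x c (π * a)) = x c a ⬝ᵥ ((M0 m c)⁻¹ *ᵥ x c a) := by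
  obtain ⟨R, hR⟩ := exists_R c π
  have hM := M0_conj c π R hR
  have hd : IsUnit R.det := by
    have hdet : IsUnit (M0 m c).det := (Matrix.isUnit_iff_isUnit_det _).mp hU
    rw [hM, Matrix.det_mul, Matrix.det_mul] at hdet
    exact isUnit_of_mul_isUnit_left (isUnit_of_mul_isUnit_left hdet)
  have hinv : Rᵀ * (M0 m c)⁻¹ * R = (M0 m c)⁻¹ := by
    conv_lhs => rw [hM]
    rw [Matrix.mul_inv_rev, Matrix.mul_inv_rev, ← Matrix.mul_assoc,
      Matrix.mul_nonsing_inv _ (by rwa [Matrix.det_transpose]), Matrix.one_mul, Matrix.mul_assoc,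
      Matrix.nonsing_inv_mul _ hd, Matrix.mul_one]
  conv_rhs => rw [← hinv]
  rw [hR a, ← Matrix.mulVec_mulVec, ← Matrix.mulVec_mulVec, Matrix.dotProduct_mulVec (x c a) Rᵀ,
    Matrix.vecMul_transpose]

lemma quad_sum {m : ℕ} (c : ℕ → ℝ) (hU : IsUnit (M0 m c)) :
    ∑ a : Equiv.Perm (Fin m), 1 / (Nat.factorial m : ℝ) * (x c a ⬝ᵥ ((M0 m c)⁻¹ *ᵥ x c a))
      = (Fintype.card (Unit ⊕ Pairs m) : ℝ) := by
  rw [← Matrix.trace_one (R := ℝ),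
    ← Matrix.nonsing_inv_mul (M0 m c) ((Matrix.isUnit_iff_isUnit_det _).mp hU)]
  generalize (M0 m c)⁻¹ = N
  unfold M0 momentMatrix
  rw [Finset.mul_sum, Matrix.trace_sum]
  refine Finset.sum_congr rfl fun a _ => ?_
  rw [Matrix.mul_smul, Matrix.trace_smul, Matrix.mul_vecMulVec, Matrix.trace_vecMulVec,
    dotProduct_comm, smul_eq_mul]

lemma card_idx (m : ℕ) : Fintype.card (Unit ⊕ Pairs m) = m * (m - 1) / 2 + 1 := by
  have h1 : Fintype.card (Pairs m) = m * (m - 1) / 2 := by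
    rw [← Finset.sum_range_id, Fintype.card_subtype, Finset.card_filter,
      Fintype.sum_prod_type_right, ← Fin.sum_univ_eq_sum_range]
    refine Finset.sum_congr rfl fun j _ => ?_
    rw [← Finset.card_filter]
    rw [← Fin.card_Iio j]
    congr 1
    ext t
    simp
  rw [Fintype.card_sum, h1, Fintype.card_unit, add_comm]

/-- G-optimality of the uniform design measure: if `b₀ − 2b₁ > 0` and `b₀ + (m−2)b₁ > 0`,
then `M₀` is invertible and `x(a)ᵀ M₀⁻¹ x(a) = p = m(m−1)/2 + 1` for every treatment `a`. -/
theorem statement13 {m : ℕ} (hm : 3 ≤ m) (c : ℕ → ℝ) (hc1 : c 1 = 1)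
    (hmono : ∀ h : ℕ, 1 ≤ h → h + 1 ≤ m - 1 → c (h + 1) ≤ c h)
    (hlast : 0 ≤ c (m - 1))
    (hpos1 : 0 < b0 m c - 2 * b1 m c)
    (hpos2 : 0 < b0 m c + ((m : ℝ) - 2) * b1 m c) :
    IsUnit (M0 m c) ∧ ∀ a : Equiv.Perm (Fin m),
      x c a ⬝ᵥ ((M0 m c)⁻¹ *ᵥ x c a) = ((m * (m - 1) / 2 + 1 : ℕ) : ℝ) := by
  have hU := isUnit_M0 hm c hc1 hmono hlast
  refine ⟨hU, fun a => ?_⟩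
  rw [← card_idx, ← quad_sum c hU]
  have h : ∀ b : Equiv.Perm (Fin m), x c b ⬝ᵥ ((M0 m c)⁻¹ *ᵥ x c b)
      = x c a ⬝ᵥ ((M0 m c)⁻¹ *ᵥ x c a) := by
    intro b
    have := quad_const c hU (b * a⁻¹) a
    rwa [inv_mul_cancel_right] at this
  simp only [h, Finset.sum_const, Finset.card_univ, Fintype.card_perm, Fintype.card_fin]
  have : (Nat.factorial m : ℝ) ≠ 0 := by positivity
  rw [nsmul_eq_mul]
  field_simp
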